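/- Let n ≥ 1 and let T₁,…,Tₙ : H → Set H be monotone operators on a real Hilbert space H such that T_l is μ-strongly monotone for some l ∈ {1,…,n} and μ > 0, and let p* = (z*, w₁*,…,w_{n−1}*) ∈ S. Let k ≥ 1 and α̲ > 0. For t = 1,…,k suppose: x_i^t, y_i^t ∈ H with y_i^t ∈ T_i x_i^t for i = 1,…,n; φ_t is the separator function built from (x_i^t, y_i^t) and g_t is its gradient with respect to ⟨·,·⟩_γ, with g_t ≠ 0; p^t ∈ Hⁿ with φ_t(p^t) ≥ 0; β_t ∈ (0,2); α_t = β_t φ_t(p^t)/‖g_t‖_γ² satisfies α_t ≥ α̲; and p^{t+1} = p^t − α_t g_t. Then μ Σ_{t=1}^{k} ‖z* − x_l^t‖² ≤ (1/(2α̲)) (Σ_{t=1}^{k} ‖p^{t+1} − p^t‖_γ² + ‖p¹ − p*‖_γ²), and consequently the averaged point x̄ = (1/k) Σ_{t=1}^{k} x_l^t satisfies μ ‖x̄ − z*‖² ≤ (1/(2 α̲ k)) (Σ_{t=1}^{k} ‖p^{t+1} − p^t‖_γ² + ‖p¹ − p*‖_γ²). -/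

import Mathlib

open scoped RealInnerProductSpace

/-!
The separator is affine, so `φ p - φ p* = ⟪p - p*, ∇φ⟫_γ`; since it is nonnegative at the iterate
and, by strong monotonicity, at most `-μ‖z* - x_l‖²` at the solution, each step satisfies
`2 α μ ‖z* - x_l‖² ≤ 2 α ⟪p - p*, ∇φ⟫_γ = ‖p - p*‖_γ² - ‖p⁺ - p*‖_γ² + ‖p⁺ - p‖_γ²`.
Summing telescopes, and Jensen's inequality passes to the average.
-/

section Averages

variable {ι E : Type*} [SeminormedAddCommGroup E] [NormedSpace ℝ E]

lemma norm_average_sub_sq_le {s : Finset ι} (hs : s.Nonempty) (x : ι → E) (z : E) :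
    ‖(s.card : ℝ)⁻¹ • (∑ i ∈ s, x i) - z‖ ^ 2 ≤ (s.card : ℝ)⁻¹ * ∑ i ∈ s, ‖x i - z‖ ^ 2 := by
  have hconvex : ConvexOn ℝ Set.univ fun v : E => dist v z ^ 2 :=
    (convexOn_univ_dist z).pow (fun _ _ => dist_nonneg) 2
  have hcard : (s.card : ℝ) ≠ 0 := Nat.cast_ne_zero.mpr hs.card_ne_zero
  simpa only [dist_eq_norm, smul_eq_mul, ← Finset.smul_sum, ← Finset.mul_sum] using
    hconvex.map_sum_le (t := s) (w := fun _ => (s.card : ℝ)⁻¹) (p := x)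
      (fun _ _ => by positivity)
      (by rw [Finset.sum_const, nsmul_eq_mul, mul_inv_cancel₀ hcard])
      (fun _ _ => Set.mem_univ _)

lemma mul_norm_average_sub_sq_le {s : Finset ι} (hs : s.Nonempty) {x : ι → E} {z : E} {μ C : ℝ}
    (hμ : 0 ≤ μ) (hsum : μ * ∑ i ∈ s, ‖x i - z‖ ^ 2 ≤ C) :
    μ * ‖(s.card : ℝ)⁻¹ • (∑ i ∈ s, x i) - z‖ ^ 2 ≤ (s.card : ℝ)⁻¹ * C :=
  calc μ * ‖(s.card : ℝ)⁻¹ • (∑ i ∈ s, x i) - z‖ ^ 2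
      ≤ μ * ((s.card : ℝ)⁻¹ * ∑ i ∈ s, ‖x i - z‖ ^ 2) :=
        mul_le_mul_of_nonneg_left (norm_average_sub_sq_le hs x z) hμ
    _ = (s.card : ℝ)⁻¹ * (μ * ∑ i ∈ s, ‖x i - z‖ ^ 2) := mul_left_comm _ _ _
    _ ≤ (s.card : ℝ)⁻¹ * C := mul_le_mul_of_nonneg_left hsum (by positivity)

end Averages

section GradientSteps

variable {E : Type*} [SeminormedAddCommGroup E] [InnerProductSpace ℝ E]

lemma two_mul_mul_inner_eq_of_eq_sub_smul {p p' g : E} {α : ℝ} (hp' : p' = p - α • g) (q : E) :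
    2 * (α * ⟪p - q, g⟫) = ‖p - q‖ ^ 2 - ‖p' - q‖ ^ 2 + ‖p' - p‖ ^ 2 := by
  have hdiff : p' - p = -(α • g) := by rw [hp', sub_sub_cancel_left]
  have hinner : ⟪p - q, p' - p⟫ = -(α * ⟪p - q, g⟫) := by
    rw [hdiff, inner_neg_right, real_inner_smul_right]
  rw [← sub_add_sub_cancel' p q p', norm_add_sq_real, hinner]
  ring

lemma two_mul_mul_sum_le_of_gradient_steps {p g : ℕ → E} {α δ : ℕ → ℝ} {q : E} {a : ℝ}
    {m n : ℕ} (hmn : m ≤ n) (ha : 0 ≤ a)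
    (hα : ∀ t ∈ Set.Icc m n, a ≤ α t)
    (hδ₀ : ∀ t ∈ Set.Icc m n, 0 ≤ δ t)
    (hδ : ∀ t ∈ Set.Icc m n, δ t ≤ ⟪p t - q, g t⟫)
    (hstep : ∀ t ∈ Set.Icc m n, p (t + 1) = p t - α t • g t) :
    2 * a * ∑ t ∈ Finset.Icc m n, δ t ≤
      ∑ t ∈ Finset.Icc m n, ‖p (t + 1) - p t‖ ^ 2 + ‖p m - q‖ ^ 2 := by
  have hterm : ∀ t ∈ Finset.Icc m n, 2 * a * δ t ≤
      ‖p (t + 1) - p t‖ ^ 2 - (‖p (t + 1) - q‖ ^ 2 - ‖p t - q‖ ^ 2) := by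
    intro t ht
    replace ht := Finset.mem_Icc.mp ht
    have hweight : a * δ t ≤ α t * ⟪p t - q, g t⟫ :=
      mul_le_mul (hα t ht) (hδ t ht) (hδ₀ t ht) (ha.trans (hα t ht))
    linarith [two_mul_mul_inner_eq_of_eq_sub_smul (hstep t ht) q]
  calc 2 * a * ∑ t ∈ Finset.Icc m n, δ t
      ≤ ∑ t ∈ Finset.Icc m n,
          (‖p (t + 1) - p t‖ ^ 2 - (‖p (t + 1) - q‖ ^ 2 - ‖p t - q‖ ^ 2)) := by
        rw [Finset.mul_sum]
        exact Finset.sum_le_sum hterm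
    _ = ∑ t ∈ Finset.Icc m n, ‖p (t + 1) - p t‖ ^ 2
          - (‖p (n + 1) - q‖ ^ 2 - ‖p m - q‖ ^ 2) := by
        rw [Finset.sum_sub_distrib, Finset.sum_Icc_sub hmn fun t => ‖p t - q‖ ^ 2]
    _ ≤ ∑ t ∈ Finset.Icc m n, ‖p (t + 1) - p t‖ ^ 2 + ‖p m - q‖ ^ 2 := by
        linarith [sq_nonneg ‖p (n + 1) - q‖]

end GradientSteps

section WeightedProduct

variable {ι H : Type*} [Fintype ι] [NormedAddCommGroup H] [InnerProductSpace ℝ H]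

/-- The map `(z, w) ↦ (√γ z, w)` into the `ℓ²` product. For `0 ≤ γ` it transports the weighted
inner product `⟪·,·⟫_γ` of `H × (ι → H)`, whose library norm is the supremum norm, to the
inner product of a library inner product space. -/
noncomputable def weightedEmbedding (γ : ℝ) :
    H × (ι → H) →ₗ[ℝ] WithLp 2 (H × PiLp 2 fun _ : ι => H) where
  toFun p := WithLp.toLp 2 (√γ • p.1, WithLp.toLp 2 p.2)
  map_add' p q := by
    simp only [Prod.fst_add, Prod.snd_add, smul_add, WithLp.toLp_add, ← Prod.mk_add_mk]
  map_smul' c p := by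
    simp only [Prod.smul_fst, Prod.smul_snd, smul_comm √γ c, WithLp.toLp_smul, ← Prod.smul_mk,
      RingHom.id_apply]

lemma inner_weightedEmbedding {γ : ℝ} (hγ : 0 ≤ γ) (p q : H × (ι → H)) :
    ⟪weightedEmbedding γ p, weightedEmbedding γ q⟫ = γ * ⟪p.1, q.1⟫ + ∑ i, ⟪p.2 i, q.2 i⟫ := by
  have hfst : ⟪√γ • p.1, √γ • q.1⟫ = γ * ⟪p.1, q.1⟫ := by
    rw [real_inner_smul_left, real_inner_smul_right, ← mul_assoc, Real.mul_self_sqrt hγ]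
  simp only [weightedEmbedding, LinearMap.coe_mk, AddHom.coe_mk, WithLp.prod_inner_apply,
    PiLp.inner_apply, hfst]

lemma norm_weightedEmbedding_sub_sq {γ : ℝ} (hγ : 0 ≤ γ) (p q : H × (ι → H)) :
    ‖weightedEmbedding γ p - weightedEmbedding γ q‖ ^ 2 =
      γ * ‖p.1 - q.1‖ ^ 2 + ∑ i, ‖p.2 i - q.2 i‖ ^ 2 := by
  simp only [← map_sub, ← real_inner_self_eq_norm_sq, inner_weightedEmbedding hγ, Prod.fst_sub,
    Prod.snd_sub, Pi.sub_apply]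

end WeightedProduct

section Separator

variable {H : Type*} {m : ℕ}

/-- The full family `(w₁, …, w_{n-1}, -∑ wᵢ)` of dual variables encoded by its first `n - 1`
members, with `n = m + 1`. -/
def completedDual [AddCommGroup H] (w : Fin m → H) : Fin (m + 1) → H :=
  Fin.snoc w (-∑ i, w i)

lemma completedDual_mem [AddCommGroup H] {T : Fin (m + 1) → H → Set H} {z : H} {w : Fin m → H}
    (hw : ∀ i : Fin m, w i ∈ T i.castSucc z) (hlast : -(∑ i, w i) ∈ T (Fin.last m) z)
    (i : Fin (m + 1)) : completedDual w i ∈ T i z := by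
  induction i using Fin.lastCases with
  | last => simpa only [completedDual, Fin.snoc_last] using hlast
  | cast i => simpa only [completedDual, Fin.snoc_castSucc] using hw i

variable [SeminormedAddCommGroup H] [InnerProductSpace ℝ H]

/-- The separator function `φ` of the points `(xᵢ, yᵢ)`, evaluated at `p = (z, w)`. -/
def separator (x y : Fin (m + 1) → H) (p : H × (Fin m → H)) : ℝ :=
  (∑ i : Fin m, ⟪p.1 - x i.castSucc, y i.castSucc - p.2 i⟫)
    + ⟪p.1 - x (Fin.last m), y (Fin.last m) + ∑ i, p.2 i⟫

/-- The gradient of `separator x y` with respect to `⟪·,·⟫_γ`. -/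
noncomputable def separatorGradient (γ : ℝ) (x y : Fin (m + 1) → H) : H × (Fin m → H) :=
  (γ⁻¹ • ∑ i, y i, fun i => x i.castSucc - x (Fin.last m))

lemma separator_eq_sum_inner (x y : Fin (m + 1) → H) (p : H × (Fin m → H)) :
    separator x y p = ∑ i, ⟪p.1 - x i, y i - completedDual p.2 i⟫ := by
  simp only [separator, completedDual, Fin.sum_univ_castSucc, Fin.snoc_castSucc, Fin.snoc_last,
    sub_neg_eq_add]

lemma separator_sub_separator (x y : Fin (m + 1) → H) (p q : H × (Fin m → H)) :
    separator x y p - separator x y q =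
      ⟪p.1 - q.1, ∑ i, y i⟫ + ∑ i, ⟪p.2 i - q.2 i, x i.castSucc - x (Fin.last m)⟫ := by
  simp only [separator, Fin.sum_univ_castSucc, inner_sub_left, inner_sub_right, inner_add_right,
    inner_sum, Finset.sum_sub_distrib, real_inner_comm (p.2 _), real_inner_comm (q.2 _)]
  ring

lemma le_neg_separator {x y : Fin (m + 1) → H} {p : H × (Fin m → H)} {l : Fin (m + 1)} {c : ℝ}
    (hmono : ∀ i ≠ l, 0 ≤ ⟪x i - p.1, y i - completedDual p.2 i⟫)
    (hl : c ≤ ⟪x l - p.1, y l - completedDual p.2 l⟫) :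
    c ≤ -separator x y p := by
  have hrest : 0 ≤ ∑ i ∈ Finset.univ.erase l, ⟪x i - p.1, y i - completedDual p.2 i⟫ :=
    Finset.sum_nonneg fun i hi => hmono i (Finset.ne_of_mem_erase hi)
  calc c ≤ ∑ i, ⟪x i - p.1, y i - completedDual p.2 i⟫ := by
        rw [← Finset.add_sum_erase _ _ (Finset.mem_univ l)]
        linarith
    _ = -separator x y p := by
        simp only [separator_eq_sum_inner, ← Finset.sum_neg_distrib, ← inner_neg_left, neg_sub]

end Separator

section SeparatorGradient

variable {H : Type*} [NormedAddCommGroup H] [InnerProductSpace ℝ H] {m : ℕ}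

lemma inner_weightedEmbedding_separatorGradient {γ : ℝ} (hγ : 0 < γ) (x y : Fin (m + 1) → H)
    (p q : H × (Fin m → H)) :
    ⟪weightedEmbedding γ p - weightedEmbedding γ q,
        weightedEmbedding γ (separatorGradient γ x y)⟫ =
      separator x y p - separator x y q := by
  rw [← map_sub, inner_weightedEmbedding hγ.le, separator_sub_separator]
  simp only [separatorGradient, Prod.fst_sub, Prod.snd_sub, Pi.sub_apply, real_inner_smul_right,
    mul_inv_cancel_left₀ hγ.ne']

lemma le_inner_separatorGradient {γ : ℝ} (hγ : 0 < γ) {x y : Fin (m + 1) → H}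
    {p pstar : H × (Fin m → H)} {l : Fin (m + 1)} {c : ℝ}
    (hmono : ∀ i ≠ l, 0 ≤ ⟪x i - pstar.1, y i - completedDual pstar.2 i⟫)
    (hl : c ≤ ⟪x l - pstar.1, y l - completedDual pstar.2 l⟫)
    (hsep : 0 ≤ separator x y p) :
    c ≤ ⟪weightedEmbedding γ p - weightedEmbedding γ pstar,
      weightedEmbedding γ (separatorGradient γ x y)⟫ := by
  rw [inner_weightedEmbedding_separatorGradient hγ]
  linarith [le_neg_separator hmono hl]

end SeparatorGradient

theorem strong_monotonicity_ergodic_rate_general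
    {H : Type*} [NormedAddCommGroup H] [InnerProductSpace ℝ H]
    {m : ℕ} {γ : ℝ} (hγ : 0 < γ) {l : Fin (m + 1)} {μ : ℝ} (hμ : 0 ≤ μ)
    {pstar : H × (Fin m → H)} {k : ℕ} (hk : 1 ≤ k) {αlo : ℝ} (hαlo : 0 < αlo)
    {x y : ℕ → Fin (m + 1) → H}
    (hmono : ∀ t ∈ Set.Icc 1 k, ∀ i ≠ l,
      0 ≤ ⟪x t i - pstar.1, y t i - completedDual pstar.2 i⟫)
    (hstrong : ∀ t ∈ Set.Icc 1 k,
      μ * ‖x t l - pstar.1‖ ^ 2 ≤ ⟪x t l - pstar.1, y t l - completedDual pstar.2 l⟫)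
    {p : ℕ → H × (Fin m → H)} {α : ℕ → ℝ}
    (hsep : ∀ t ∈ Set.Icc 1 k, 0 ≤ separator (x t) (y t) (p t))
    (hα : ∀ t ∈ Set.Icc 1 k, αlo ≤ α t)
    (hstep : ∀ t ∈ Set.Icc 1 k, p (t + 1) = p t - α t • separatorGradient γ (x t) (y t)) :
    μ * (∑ t ∈ Finset.Icc 1 k, ‖pstar.1 - x t l‖ ^ 2) ≤
      (1 / (2 * αlo)) *
        (∑ t ∈ Finset.Icc 1 k, ‖weightedEmbedding γ (p (t + 1)) - weightedEmbedding γ (p t)‖ ^ 2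
          + ‖weightedEmbedding γ (p 1) - weightedEmbedding γ pstar‖ ^ 2) ∧
    μ * ‖(k : ℝ)⁻¹ • (∑ t ∈ Finset.Icc 1 k, x t l) - pstar.1‖ ^ 2 ≤
      (1 / (2 * αlo * k)) *
        (∑ t ∈ Finset.Icc 1 k, ‖weightedEmbedding γ (p (t + 1)) - weightedEmbedding γ (p t)‖ ^ 2
          + ‖weightedEmbedding γ (p 1) - weightedEmbedding γ pstar‖ ^ 2) := by
  have hsum := two_mul_mul_sum_le_of_gradient_steps
    (p := fun t => weightedEmbedding γ (p t)) (δ := fun t => μ * ‖x t l - pstar.1‖ ^ 2)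
    hk hαlo.le hα (fun _ _ => by positivity)
    (fun t ht => le_inner_separatorGradient hγ (hmono t ht) (hstrong t ht) (hsep t ht))
    (fun t ht => by rw [hstep t ht, map_sub, map_smul])
  have hrate := (le_div_iff₀' (by positivity)).mpr hsum
  rw [← Finset.mul_sum] at hrate
  constructor
  · simpa only [one_div_mul_eq_div, norm_sub_rev pstar.1] using hrate
  · have haverage := mul_norm_average_sub_sq_le (Finset.nonempty_Icc.mpr hk) hμ hrate
    rw [Nat.card_Icc, Nat.add_sub_cancel] at haverage
    exact haverage.trans_eq (by ring)

/-- Under strong monotonicity of `T l`, the projective splitting iterates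
satisfy `μ Σ_{t=1}^k ‖z* − x_l^t‖² ≤ (1/(2α̲))(Σ_{t=1}^k ‖p^{t+1} − p^t‖_γ² + ‖p¹ − p*‖_γ²)`,
and consequently the averaged point `x̄ = (1/k) Σ_{t=1}^k x_l^t` satisfies
`μ‖x̄ − z*‖² ≤ (1/(2α̲k))(Σ_{t=1}^k ‖p^{t+1} − p^t‖_γ² + ‖p¹ − p*‖_γ²)`.
Here `n = m+1 ≥ 1` and `‖(z,w)‖_γ² = γ‖z‖² + Σᵢ‖wᵢ‖²`. -/
theorem strong_monotonicity_ergodic_rate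
    {H : Type*} [NormedAddCommGroup H] [InnerProductSpace ℝ H] [CompleteSpace H]
    (m : ℕ) (γ : ℝ) (hγ : 0 < γ)
    (T : Fin (m+1) → H → Set H)
    (hT : ∀ i, ∀ x x' y y' : H, y ∈ T i x → y' ∈ T i x' → 0 ≤ ⟪x - x', y - y'⟫)
    (l : Fin (m+1)) (μ : ℝ) (hμ : 0 < μ)
    (hstrong : ∀ x x' y y' : H, y ∈ T l x → y' ∈ T l x' →
      μ * ‖x - x'‖ ^ 2 ≤ ⟪x - x', y - y'⟫)
    (zstar : H) (wstar : Fin m → H)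
    (hmem : ∀ i : Fin m, wstar i ∈ T i.castSucc zstar)
    (hmemn : -(∑ i : Fin m, wstar i) ∈ T (Fin.last m) zstar)
    (k : ℕ) (hk : 1 ≤ k) (αlo : ℝ) (hαlo : 0 < αlo)
    (x y : ℕ → Fin (m+1) → H)
    (hxy : ∀ t, 1 ≤ t → t ≤ k → ∀ i, y t i ∈ T i (x t i))
    (zseq : ℕ → H) (wseq : ℕ → Fin m → H)
    (φv πv α β : ℕ → ℝ)
    (hφv : ∀ t, 1 ≤ t → t ≤ k →
      φv t = (∑ i : Fin m, ⟪zseq t - x t i.castSucc, y t i.castSucc - wseq t i⟫)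
        + ⟪zseq t - x t (Fin.last m), y t (Fin.last m) + ∑ i : Fin m, wseq t i⟫)
    (hπv : ∀ t, 1 ≤ t → t ≤ k → πv t = (1 / γ) * ‖∑ i : Fin (m+1), y t i‖ ^ 2
      + ∑ i : Fin m, ‖x t i.castSucc - x t (Fin.last m)‖ ^ 2)
    (hπpos : ∀ t, 1 ≤ t → t ≤ k → 0 < πv t)
    (hφpos : ∀ t, 1 ≤ t → t ≤ k → 0 ≤ φv t)
    (hβ : ∀ t, 1 ≤ t → t ≤ k → 0 < β t ∧ β t < 2)
    (hα : ∀ t, 1 ≤ t → t ≤ k → α t = β t * φv t / πv t)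
    (hαge : ∀ t, 1 ≤ t → t ≤ k → αlo ≤ α t)
    (hzupd : ∀ t, 1 ≤ t → t ≤ k →
      zseq (t+1) = zseq t - ((1 / γ) * α t) • (∑ i : Fin (m+1), y t i))
    (hwupd : ∀ t, 1 ≤ t → t ≤ k → ∀ i : Fin m,
      wseq (t+1) i = wseq t i - α t • (x t i.castSucc - x t (Fin.last m))) :
    μ * (∑ t ∈ Finset.Icc 1 k, ‖zstar - x t l‖ ^ 2) ≤
      (1 / (2 * αlo)) *
        ((∑ t ∈ Finset.Icc 1 k, (γ * ‖zseq (t+1) - zseq t‖ ^ 2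
            + ∑ i : Fin m, ‖wseq (t+1) i - wseq t i‖ ^ 2))
          + (γ * ‖zseq 1 - zstar‖ ^ 2 + ∑ i : Fin m, ‖wseq 1 i - wstar i‖ ^ 2)) ∧
    μ * ‖(k : ℝ)⁻¹ • (∑ t ∈ Finset.Icc 1 k, x t l) - zstar‖ ^ 2 ≤
      (1 / (2 * αlo * k)) *
        ((∑ t ∈ Finset.Icc 1 k, (γ * ‖zseq (t+1) - zseq t‖ ^ 2
            + ∑ i : Fin m, ‖wseq (t+1) i - wseq t i‖ ^ 2))
          + (γ * ‖zseq 1 - zstar‖ ^ 2 + ∑ i : Fin m, ‖wseq 1 i - wstar i‖ ^ 2)) := by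
  have hdual := completedDual_mem hmem hmemn
  simpa only [norm_weightedEmbedding_sub_sq hγ.le] using
    strong_monotonicity_ergodic_rate_general (pstar := (zstar, wstar))
      (p := fun t => (zseq t, wseq t)) hγ hμ.le hk hαlo
      (fun t ht i _ => hT i _ _ _ _ (hxy t ht.1 ht.2 i) (hdual i))
      (fun t ht => hstrong _ _ _ _ (hxy t ht.1 ht.2 l) (hdual l))
      (fun t ht => (hφpos t ht.1 ht.2).trans_eq (hφv t ht.1 ht.2))
      (fun t ht => hαge t ht.1 ht.2)
      (fun t ht => Prod.ext
        (by rw [hzupd t ht.1 ht.2, mul_comm, mul_smul, one_div]; rfl)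
        (funext (hwupd t ht.1 ht.2)))
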